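/- arXiv:1907.09477 — 2 statements merged into one kernel-verified Lean document; each statement's English description precedes it below -/
import Mathlib

section
/- Let C_∞ be a d-dimensional extreme-value copula such that for each j = 1,…,d the first-order partial derivative Ċ_{∞,j}(u) := ∂C_∞(u)/∂u_j exists and is continuous on {u ∈ [0,1]^d : u_j ∈ (0,1)}, with Ċ_{∞,j}(u) := 0 whenever u_j ∈ {0,1}. Then for every N ∈ ℕ and all points u_1, …, u_N ∈ [0,1]^d, the N×N matrix with (i,j)-entry K̂^D(u_i, u_j) − K̂(u_i, u_j) is symmetric positive semidefinite; that is, the covariance matrix of the limiting empirical copula process based on sliding block maxima (estimated margins) is dominated in the Loewner order by that of the corresponding disjoint-blocks process. -/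
/-!
Write `D(u,v)` for the difference `γ^D(u,v) - γ(v,u,1,1)` of the two kernels before estimating the
margins. Since `hatKernel` is obtained from its kernel by evaluating the associated bilinear form
at the combinations `δ_u - ∑ j, Ċ_j(u) δ_{u^{(j)}}`, it suffices that `D` is a positive
semidefinite kernel on the cube (`gammaD_sub_gammaSl_posSemidef`).

Collecting the integrals, `D(u,v) = C(u ∧ v) + C(u) C(v) - 2 ∫₀¹ (C(u) C(v))^ξ C(u ∧ v)^(1-ξ) dξ`,
so with `L(u,v) = log (C(u ∧ v) / (C(u) C(v)))`, read as `0` where `C(u) C(v) = 0`, one gets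
`D(u,v) = C(u) C(v) f(L(u,v))`, where `f(L) = e^L + 1 - 2 ∫₀¹ e^((1-ξ)L) dξ`
(`gammaD_sub_gammaSl_eq`). The Taylor coefficients of `f` at `0` are
`1/k! - 2/(k+1)!` for `k ≥ 1` and `0` for `k = 0`, all nonnegative, so by the Schur product theorem
`D` is positive semidefinite as soon as `L` is.

Max-stability says that `C(u)^t = μ {x ≤ u^t}` for every `t > 0`, so the kernel
`C(u ∧ v)^t - C(u)^t C(v)^t` is a covariance kernel of indicators. Dividing by `t` and letting
`t → 0` from the right gives `L`, which is thus positive semidefinite (`logRatio_posSemidef`).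
-/

open MeasureTheory Filter Set

noncomputable section

/-- The closed unit cube `[0,1]^d` in `ℝ^d`. -/
def unitBox (d : ℕ) : Set (Fin d → ℝ) := {u | ∀ j, u j ∈ Set.Icc (0:ℝ) 1}

/-- `C` is (the restriction to `[0,1]^d` of) the distribution function of a Borel probability
measure concentrated on `[0,1]^d` whose one-dimensional margins are uniform on `[0,1]`. -/
def IsCopula {d : ℕ} (C : (Fin d → ℝ) → ℝ) : Prop :=
  ∃ μ : Measure (Fin d → ℝ), IsProbabilityMeasure μ ∧
    μ (unitBox d)ᶜ = 0 ∧
    (∀ u ∈ unitBox d, C u = (μ {x | ∀ j, x j ≤ u j}).toReal) ∧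
    (∀ j : Fin d, ∀ t ∈ Set.Icc (0:ℝ) 1, (μ {x | x j ≤ t}).toReal = t)

/-- Extreme-value copula: max-stability. -/
def IsEVCopula {d : ℕ} (C : (Fin d → ℝ) → ℝ) : Prop :=
  IsCopula C ∧ ∀ s : ℝ, 0 < s → ∀ u ∈ unitBox d, (C fun j => u j ^ (1/s)) ^ s = C u

/-- The covariance kernel `γ(v,u,c,a)` of the sliding-blocks limit process. -/
def gammaSl {d : ℕ} (C : (Fin d → ℝ) → ℝ) (v u : Fin d → ℝ) (c a : ℝ) : ℝ :=
  (∫ ξ in (-a)..0,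
      C (fun j => u j ^ (1/a)) ^ (-ξ) *
      C (fun j => min (v j ^ (1/c)) (u j ^ (1/a))) ^ (ξ + a) *
      C (fun j => v j ^ (1/c)) ^ (c - ξ - a)) +
  (∫ _ξ in (0:ℝ)..(c - a),
      C (fun j => v j ^ (1/c)) ^ (c - a) *
      C (fun j => min (v j ^ (1/c)) (u j ^ (1/a))) ^ a) +
  (∫ ξ in (c - a)..c,
      C (fun j => v j ^ (1/c)) ^ ξ *
      C (fun j => min (v j ^ (1/c)) (u j ^ (1/a))) ^ (c - ξ) *
      C (fun j => u j ^ (1/a)) ^ (ξ + a - c)) -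
  (c + a) * C v * C u

/-- The covariance kernel `γ^D(u,v)` of the disjoint-blocks limit process. -/
def gammaD {d : ℕ} (C : (Fin d → ℝ) → ℝ) (u v : Fin d → ℝ) : ℝ :=
  C (fun j => min (u j) (v j)) - C u * C v

/-- `u^{(j)} = (1,…,1,u_j,1,…,1)`. -/
def coordVec {d : ℕ} (u : Fin d → ℝ) (j : Fin d) : Fin d → ℝ :=
  Function.update (fun _ => (1:ℝ)) j (u j)

/-- The covariance kernel of the limit of the empirical copula process obtained from a
kernel `k` and the partial derivatives `Cdot` of the limit copula. -/
def hatKernel {d : ℕ} (Cdot : Fin d → (Fin d → ℝ) → ℝ)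
    (k : (Fin d → ℝ) → (Fin d → ℝ) → ℝ) (u v : Fin d → ℝ) : ℝ :=
  k u v - (∑ j, Cdot j u * k (coordVec u j) v) - (∑ j, Cdot j v * k u (coordVec v j)) +
    ∑ j, ∑ j', Cdot j u * Cdot j' v * k (coordVec u j) (coordVec v j')

open scoped Matrix Topology

/-! ### Positive semidefinite real matrices -/

lemma posSemidef_iff_sum {ι : Type*} [Fintype ι] {M : Matrix ι ι ℝ} :
    M.PosSemidef ↔ (∀ i j, M i j = M j i) ∧ ∀ x : ι → ℝ, 0 ≤ ∑ i, ∑ j, x i * M i j * x j := by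
  rw [Matrix.posSemidef_iff_dotProduct_mulVec]
  refine and_congr ⟨fun h i j => ?_, fun h => ?_⟩ (forall_congr' fun x => ?_)
  · simpa using h.apply j i
  · ext i j
    simpa using h j i
  · simp [dotProduct, Matrix.mulVec, Finset.mul_sum, mul_assoc]

lemma posSemidef_of_tendsto {ι α : Type*} [Fintype ι] {l : Filter α} [l.NeBot]
    {M : α → Matrix ι ι ℝ} {A : Matrix ι ι ℝ} (hM : ∀ᶠ a in l, (M a).PosSemidef)
    (h : ∀ i j, Tendsto (fun a => M a i j) l (𝓝 (A i j))) : A.PosSemidef := by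
  rw [posSemidef_iff_sum]
  constructor
  · intro i j
    refine tendsto_nhds_unique_of_eventuallyEq (h i j) (h j i) ?_
    filter_upwards [hM] with a ha using (posSemidef_iff_sum.1 ha).1 i j
  · intro x
    have ht : Tendsto (fun a => ∑ i, ∑ j, x i * M a i j * x j) l
        (𝓝 (∑ i, ∑ j, x i * A i j * x j)) :=
      tendsto_finsetSum _ fun i _ => tendsto_finsetSum _ fun j _ =>
        ((h i j).const_mul (x i)).mul_const (x j)
    refine ge_of_tendsto ht ?_
    filter_upwards [hM] with a ha using (posSemidef_iff_sum.1 ha).2 x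

lemma posSemidef_map_pow {ι : Type*} [Fintype ι] {M : Matrix ι ι ℝ} (hM : M.PosSemidef) (k : ℕ) :
    (Matrix.of fun i j => M i j ^ k).PosSemidef := by
  induction k with
  | zero =>
    have h : (Matrix.of fun i j => M i j ^ 0) =
        Matrix.vecMulVec (fun _ : ι => (1:ℝ)) (star fun _ => 1) := by
      ext i j
      simp [Matrix.vecMulVec_apply]
    rw [h]
    exact Matrix.posSemidef_vecMulVec_self_star _
  | succ k ih =>
    have h : (Matrix.of fun i j => M i j ^ (k + 1)) = (Matrix.of fun i j => M i j ^ k) ⊙ M := by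
      ext i j
      simp [pow_succ]
    rw [h]
    exact ih.hadamard hM

/-- Entrywise application of a power series with nonnegative coefficients preserves positive
semidefiniteness. -/
lemma posSemidef_map_of_hasSum {ι : Type*} [Fintype ι] {M : Matrix ι ι ℝ} (hM : M.PosSemidef)
    {a : ℕ → ℝ} (ha : ∀ k, 0 ≤ a k) {f : ℝ → ℝ} (hf : ∀ x, HasSum (fun k => a k * x ^ k) (f x)) :
    (Matrix.of fun i j => f (M i j)).PosSemidef := by
  refine posSemidef_of_tendsto (l := atTop)
    (M := fun s : Finset ℕ => ∑ k ∈ s, a k • Matrix.of fun i j => M i j ^ k) ?_ ?_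
  · refine Eventually.of_forall fun s => Matrix.posSemidef_sum _ fun k _ => ?_
    exact (posSemidef_map_pow hM k).smul (ha k)
  · intro i j
    simpa [Matrix.sum_apply, HasSum] using hf (M i j)

/-- Covariance matrices of indicators are positive semidefinite. -/
lemma posSemidef_indicator_cov {Ω ι : Type*} [Fintype ι] [MeasurableSpace Ω] (μ : Measure Ω)
    [IsProbabilityMeasure μ] (A : ι → Set Ω) (hA : ∀ i, MeasurableSet (A i)) :
    (Matrix.of fun i j => μ.real (A i ∩ A j) - μ.real (A i) * μ.real (A j)).PosSemidef := by
  rw [posSemidef_iff_sum]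
  refine ⟨fun i j => by simp [inter_comm, mul_comm], fun x => ?_⟩
  set X : Ω → ℝ := fun ω => ∑ i, x i * (A i).indicator 1 ω with hX
  have hint : ∀ B : Set Ω, MeasurableSet B → Integrable (B.indicator (1 : Ω → ℝ)) μ :=
    fun B hB => (integrable_const (1:ℝ)).indicator hB
  have hmem : MemLp X 2 μ := by
    refine memLp_finsetSum _ fun i _ => MemLp.const_mul ?_ _
    exact (memLp_const (1:ℝ)).indicator (hA i)
  have h1 : ∫ ω, X ω ∂μ = ∑ i, x i * μ.real (A i) := by
    rw [hX, integral_finsetSum _ fun i _ => (hint _ (hA i)).const_mul _]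
    refine Finset.sum_congr rfl fun i _ => ?_
    rw [integral_const_mul, integral_indicator_one (hA i)]
  have hsq : ∀ ω, (X ^ 2) ω = ∑ i, ∑ j, x i * x j * (A i ∩ A j).indicator (1 : Ω → ℝ) ω := by
    intro ω
    simp only [Pi.pow_apply, hX, sq, Finset.sum_mul_sum, Set.inter_indicator_one, Pi.mul_apply]
    exact Finset.sum_congr rfl fun i _ => Finset.sum_congr rfl fun j _ => by ring
  have h2 : ∫ ω, (X ^ 2) ω ∂μ = ∑ i, ∑ j, x i * x j * μ.real (A i ∩ A j) := by
    simp_rw [hsq]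
    rw [integral_finsetSum _ fun i _ => integrable_finsetSum _ fun j _ =>
      (hint _ ((hA i).inter (hA j))).const_mul _]
    refine Finset.sum_congr rfl fun i _ => ?_
    rw [integral_finsetSum _ fun j _ => (hint _ ((hA i).inter (hA j))).const_mul _]
    refine Finset.sum_congr rfl fun j _ => ?_
    rw [integral_const_mul, integral_indicator_one ((hA i).inter (hA j))]
  have hv := ProbabilityTheory.variance_nonneg X μ
  rw [ProbabilityTheory.variance_eq_sub hmem, h1, h2, sq, Finset.sum_mul_sum,
    ← Finset.sum_sub_distrib] at hv
  refine hv.trans_eq (Finset.sum_congr rfl fun i _ => ?_)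
  rw [← Finset.sum_sub_distrib]
  refine Finset.sum_congr rfl fun j _ => ?_
  simp only [Matrix.of_apply]
  ring

/-! ### The power series of the comparison function -/

lemma hasSum_exp_real (L : ℝ) : HasSum (fun k : ℕ => L ^ k / (k.factorial : ℝ)) (Real.exp L) := by
  rw [Real.exp_eq_exp_ℝ]
  exact NormedSpace.expSeries_div_hasSum_exp L

lemma hasSum_integral_exp (L : ℝ) :
    HasSum (fun k : ℕ => L ^ k / ((k + 1).factorial : ℝ))
      (∫ ξ in (0:ℝ)..1, Real.exp ((1 - ξ) * L)) := by
  have hflip : ∫ ξ in (0:ℝ)..1, Real.exp ((1 - ξ) * L) = ∫ ξ in (0:ℝ)..1, Real.exp (ξ * L) := by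
    have := intervalIntegral.integral_comp_sub_left (a := 0) (b := 1)
      (fun ξ => Real.exp (ξ * L)) (1:ℝ)
    simpa using this
  rw [hflip]
  rcases eq_or_ne L 0 with rfl | hL
  · have := hasSum_single (f := fun k : ℕ => (0:ℝ) ^ k / ((k + 1).factorial : ℝ)) 0
      (fun k hk => by simp [hk])
    simpa using this
  · have hval : ∫ ξ in (0:ℝ)..1, Real.exp (ξ * L) = (Real.exp L - 1) / L := by
      rw [intervalIntegral.integral_comp_mul_right (fun y => Real.exp y) hL]
      simp [integral_exp, div_eq_inv_mul]
    rw [hval]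
    have h1 := ((hasSum_nat_add_iff' 1).2 (hasSum_exp_real L)).div_const L
    simp only [Finset.range_one, Finset.sum_singleton, pow_zero, Nat.factorial_zero, Nat.cast_one,
      div_one] at h1
    refine h1.congr_fun fun k => ?_
    rw [pow_succ]
    field_simp

/-- The Taylor coefficients of `L ↦ e^L + 1 - 2 ∫₀¹ e^((1-ξ)L) dξ`. -/
def cmpCoeff (k : ℕ) : ℝ :=
  1 / (k.factorial : ℝ) + (if k = 0 then 1 else 0) - 2 / ((k + 1).factorial : ℝ)

lemma cmpCoeff_nonneg (k : ℕ) : 0 ≤ cmpCoeff k := by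
  unfold cmpCoeff
  rcases k with _ | k
  · norm_num
  · have hk : (0:ℝ) < ((k + 1).factorial : ℝ) := by positivity
    rw [Nat.factorial_succ (k + 1)]
    simp only [Nat.add_eq_zero_iff, one_ne_zero, and_false, if_false]
    push_cast
    rw [add_zero, sub_nonneg, div_le_div_iff₀ (by positivity) hk]
    nlinarith [mul_nonneg (Nat.cast_nonneg (α := ℝ) k) hk.le]

/-- The function `f` relating the difference of the kernels to the log-ratio kernel. -/
def cmpFun (L : ℝ) : ℝ := Real.exp L + 1 - 2 * ∫ ξ in (0:ℝ)..1, Real.exp ((1 - ξ) * L)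

lemma cmpFun_hasSum (L : ℝ) : HasSum (fun k => cmpCoeff k * L ^ k) (cmpFun L) := by
  have h := ((hasSum_exp_real L).add (hasSum_ite_eq (0:ℕ) (1:ℝ))).sub
    ((hasSum_integral_exp L).mul_left 2)
  refine h.congr_fun fun k => ?_
  unfold cmpCoeff
  rcases k with _ | k
  · simp
  · rw [if_neg (by omega)]
    ring

/-! ### Extreme-value copulas -/

lemma EV_repr {d : ℕ} {C : (Fin d → ℝ) → ℝ} (hC : IsEVCopula C) :
    ∃ μ : Measure (Fin d → ℝ), IsProbabilityMeasure μ ∧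
      ∀ t : ℝ, 0 < t → ∀ u ∈ unitBox d, C u ^ t = μ.real {x | ∀ j, x j ≤ u j ^ t} := by
  obtain ⟨⟨μ, hμ, -, hCμ, -⟩, hmax⟩ := hC
  refine ⟨μ, hμ, fun t ht u hu => ?_⟩
  have hbox : (fun j => u j ^ t) ∈ unitBox d := fun j =>
    ⟨Real.rpow_nonneg (hu j).1 _, Real.rpow_le_one (hu j).1 (hu j).2 ht.le⟩
  have h := hmax (1 / t) (by positivity) u hu
  rw [one_div_one_div] at h
  have h0 : 0 ≤ C (fun j => u j ^ t) := by
    rw [hCμ _ hbox]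
    exact ENNReal.toReal_nonneg
  rw [← h, ← Real.rpow_mul h0, one_div_mul_cancel ht.ne', Real.rpow_one, hCμ _ hbox]
  rfl

lemma min_mem_unitBox {d : ℕ} {u v : Fin d → ℝ} (hu : u ∈ unitBox d) (hv : v ∈ unitBox d) :
    (fun j => min (u j) (v j)) ∈ unitBox d := fun j =>
  ⟨le_min (hu j).1 (hv j).1, (min_le_left _ _).trans (hu j).2⟩

lemma lowerOrthant_min {d : ℕ} {u v : Fin d → ℝ} (hu : u ∈ unitBox d) (hv : v ∈ unitBox d)
    {t : ℝ} (ht : 0 < t) :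
    {x : Fin d → ℝ | ∀ j, x j ≤ min (u j) (v j) ^ t} =
      {x | ∀ j, x j ≤ u j ^ t} ∩ {x | ∀ j, x j ≤ v j ^ t} := by
  ext x
  simp only [mem_ofPred_eq, mem_inter_iff, ← forall_and, ← le_min_iff]
  refine forall_congr' fun j => ?_
  rw [(Real.monotoneOn_rpow_Ici_of_exponent_nonneg ht.le).map_min (hu j).1 (hv j).1]

lemma EV_nonneg {d : ℕ} {C : (Fin d → ℝ) → ℝ} (hC : IsEVCopula C) {u : Fin d → ℝ}
    (hu : u ∈ unitBox d) : 0 ≤ C u := by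
  obtain ⟨μ, hμ, h⟩ := EV_repr hC
  have := h 1 one_pos u hu
  rw [Real.rpow_one] at this
  rw [this]
  exact measureReal_nonneg

lemma EV_min_le {d : ℕ} {C : (Fin d → ℝ) → ℝ} (hC : IsEVCopula C) {u v : Fin d → ℝ}
    (hu : u ∈ unitBox d) (hv : v ∈ unitBox d) : C (fun j => min (u j) (v j)) ≤ C u := by
  obtain ⟨μ, hμ, h⟩ := EV_repr hC
  have h1 := h 1 one_pos u hu
  have h2 := h 1 one_pos _ (min_mem_unitBox hu hv)
  rw [lowerOrthant_min hu hv one_pos] at h2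
  rw [Real.rpow_one] at h1 h2
  rw [h1, h2]
  exact measureReal_mono inter_subset_left

/-- The bound `C(u ∧ v)^t ≥ C(u)^t + C(v)^t - 1` becomes positive for small `t`. -/
lemma EV_min_pos {d : ℕ} {C : (Fin d → ℝ) → ℝ} (hC : IsEVCopula C) {u v : Fin d → ℝ}
    (hu : u ∈ unitBox d) (hv : v ∈ unitBox d) (hCu : 0 < C u) (hCv : 0 < C v) :
    0 < C (fun j => min (u j) (v j)) := by
  obtain ⟨μ, hμ, h⟩ := EV_repr hC
  have hlim : Tendsto (fun t : ℝ => C u ^ t + C v ^ t) (𝓝[>] 0) (𝓝 (1 + 1)) := by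
    have : Tendsto (fun t : ℝ => C u ^ t + C v ^ t) (𝓝 0) (𝓝 (C u ^ (0:ℝ) + C v ^ (0:ℝ))) :=
      ((Real.continuous_const_rpow hCu.ne').add (Real.continuous_const_rpow hCv.ne')).tendsto 0
    rw [Real.rpow_zero, Real.rpow_zero] at this
    exact this.mono_left nhdsWithin_le_nhds
  obtain ⟨t, h1, ht⟩ := ((hlim.eventually (lt_mem_nhds (by norm_num : (1:ℝ) < 1 + 1))).and
    self_mem_nhdsWithin).exists
  have ht : 0 < t := ht
  refine (EV_nonneg hC (min_mem_unitBox hu hv)).lt_of_ne fun h0 => ?_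
  have hm := h t ht _ (min_mem_unitBox hu hv)
  rw [← h0, Real.zero_rpow ht.ne', lowerOrthant_min hu hv ht] at hm
  have hunion := measureReal_union_add_inter (μ := μ) (s := {x : Fin d → ℝ | ∀ j, x j ≤ u j ^ t})
    (t := {x : Fin d → ℝ | ∀ j, x j ≤ v j ^ t})
    (by simp only [ofPred_forall]
        exact MeasurableSet.iInter fun j => measurableSet_le (measurable_pi_apply j)
          measurable_const)
  rw [← hm, ← h t ht u hu, ← h t ht v hv, add_zero] at hunion
  have := measureReal_le_one (μ := μ)
    (s := {x : Fin d → ℝ | ∀ j, x j ≤ u j ^ t} ∪ {x : Fin d → ℝ | ∀ j, x j ≤ v j ^ t})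
  linarith

/-! ### The log-ratio kernel -/

open Classical in
/-- The kernel `log (C(u ∧ v) / (C(u) C(v)))`, set to `0` where `C(u) C(v) = 0`. -/
def logRatio {d : ℕ} (C : (Fin d → ℝ) → ℝ) (u v : Fin d → ℝ) : ℝ :=
  if C u * C v = 0 then 0
  else Real.log (C fun j => min (u j) (v j)) - Real.log (C u * C v)

/-- The log-ratio kernel is the right derivative at `t = 0` of the covariance kernels
`C(u ∧ v)^t - C(u)^t C(v)^t`. -/
lemma logRatio_tendsto {d : ℕ} {C : (Fin d → ℝ) → ℝ} (hC : IsEVCopula C) {u v : Fin d → ℝ}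
    (hu : u ∈ unitBox d) (hv : v ∈ unitBox d) :
    Tendsto (fun t : ℝ => t⁻¹ * (C (fun j => min (u j) (v j)) ^ t - C u ^ t * C v ^ t))
      (𝓝[>] 0) (𝓝 (logRatio C u v)) := by
  have hu0 := EV_nonneg hC hu
  have hv0 := EV_nonneg hC hv
  unfold logRatio
  split_ifs with h0
  · have hm : C (fun j => min (u j) (v j)) = 0 := by
      refine le_antisymm ?_ (EV_nonneg hC (min_mem_unitBox hu hv))
      rcases mul_eq_zero.1 h0 with h | h
      · exact (EV_min_le hC hu hv).trans_eq h
      · have := EV_min_le hC hv hu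
        simp_rw [min_comm] at this ⊢
        exact this.trans_eq h
    refine tendsto_const_nhds.congr' ?_
    filter_upwards [self_mem_nhdsWithin] with t ht
    have ht : 0 < t := ht
    rw [← Real.mul_rpow hu0 hv0, h0, hm]
    simp
  · have hp : 0 < C u * C v := (mul_nonneg hu0 hv0).lt_of_ne' h0
    have hm : 0 < C (fun j => min (u j) (v j)) :=
      EV_min_pos hC hu hv (hu0.lt_of_ne' (left_ne_zero_of_mul h0))
        (hv0.lt_of_ne' (right_ne_zero_of_mul h0))
    have hd := ((Real.hasStrictDerivAt_const_rpow hm 0).hasDerivAt.sub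
      (Real.hasStrictDerivAt_const_rpow hp 0).hasDerivAt)
    have := hd.tendsto_slope_zero_right
    simpa [Real.mul_rpow hu0 hv0] using this

lemma logRatio_posSemidef {d : ℕ} {C : (Fin d → ℝ) → ℝ} (hC : IsEVCopula C) {ι : Type*}
    [Fintype ι] (p : ι → Fin d → ℝ) (hp : ∀ i, p i ∈ unitBox d) :
    (Matrix.of fun i j => logRatio C (p i) (p j)).PosSemidef := by
  obtain ⟨μ, hμ, h⟩ := EV_repr hC
  refine posSemidef_of_tendsto (l := 𝓝[>] (0:ℝ))
    (M := fun t => t⁻¹ • Matrix.of fun i j =>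
      C (fun k => min (p i k) (p j k)) ^ t - C (p i) ^ t * C (p j) ^ t) ?_ ?_
  · filter_upwards [self_mem_nhdsWithin] with t ht
    have ht : 0 < t := ht
    refine Matrix.PosSemidef.smul ?_ (inv_nonneg.2 ht.le)
    convert posSemidef_indicator_cov μ (fun i => {x : Fin d → ℝ | ∀ k, x k ≤ p i k ^ t}) ?_
      using 4 with i j
    · rw [h t ht _ (min_mem_unitBox (hp i) (hp j)), lowerOrthant_min (hp i) (hp j) ht,
        h t ht _ (hp i), h t ht _ (hp j)]
    · intro i
      simp only [ofPred_forall]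
      exact MeasurableSet.iInter fun j => measurableSet_le (measurable_pi_apply j) measurable_const
  · intro i j
    simpa using logRatio_tendsto hC (hp i) (hp j)

/-! ### The difference of the kernels -/

lemma min_eq_mul_exp_logRatio {d : ℕ} {C : (Fin d → ℝ) → ℝ} (hC : IsEVCopula C)
    {u v : Fin d → ℝ} (hu : u ∈ unitBox d) (hv : v ∈ unitBox d) :
    C (fun j => min (u j) (v j)) = C u * C v * Real.exp (logRatio C u v) := by
  have hu0 := EV_nonneg hC hu
  have hv0 := EV_nonneg hC hv
  unfold logRatio
  split_ifs with h0
  · rw [h0, zero_mul]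
    refine le_antisymm ?_ (EV_nonneg hC (min_mem_unitBox hu hv))
    rcases mul_eq_zero.1 h0 with h | h
    · exact (EV_min_le hC hu hv).trans_eq h
    · have := EV_min_le hC hv hu
      simp_rw [min_comm] at this ⊢
      exact this.trans_eq h
  · have hm : 0 < C (fun j => min (u j) (v j)) :=
      EV_min_pos hC hu hv (hu0.lt_of_ne' (left_ne_zero_of_mul h0))
        (hv0.lt_of_ne' (right_ne_zero_of_mul h0))
    rw [Real.exp_sub, Real.exp_log hm, Real.exp_log ((mul_nonneg hu0 hv0).lt_of_ne' h0)]
    rw [mul_div_cancel₀ _ h0]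

lemma integral_eq_mul_integral_exp {d : ℕ} {C : (Fin d → ℝ) → ℝ} (hC : IsEVCopula C)
    {u v : Fin d → ℝ} (hu : u ∈ unitBox d) (hv : v ∈ unitBox d) :
    ∫ ξ in (0:ℝ)..1, C v ^ ξ * C (fun j => min (u j) (v j)) ^ (1 - ξ) * C u ^ ξ =
      C u * C v * ∫ ξ in (0:ℝ)..1, Real.exp ((1 - ξ) * logRatio C u v) := by
  have hu0 := EV_nonneg hC hu
  have hv0 := EV_nonneg hC hv
  rw [← intervalIntegral.integral_const_mul]
  refine intervalIntegral.integral_congr_ae (ae_of_all _ fun ξ hξ => ?_)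
  rw [uIoc_of_le zero_le_one] at hξ
  have hre : C v ^ ξ * C (fun j => min (u j) (v j)) ^ (1 - ξ) * C u ^ ξ =
      (C u * C v) ^ ξ * C (fun j => min (u j) (v j)) ^ (1 - ξ) := by
    rw [Real.mul_rpow hu0 hv0]
    ring
  rw [hre]
  rcases (mul_nonneg hu0 hv0).eq_or_lt with h0 | h0
  · rw [← h0, Real.zero_rpow hξ.1.ne', zero_mul, zero_mul]
  · rw [min_eq_mul_exp_logRatio hC hu hv, Real.mul_rpow h0.le (Real.exp_pos _).le,
      ← mul_assoc, ← Real.rpow_add h0, ← Real.exp_mul]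
    simp [mul_comm]

lemma gammaD_sub_gammaSl_eq {d : ℕ} {C : (Fin d → ℝ) → ℝ} (hC : IsEVCopula C)
    {u v : Fin d → ℝ} (hu : u ∈ unitBox d) (hv : v ∈ unitBox d) :
    gammaD C u v - gammaSl C v u 1 1 = C u * C v * cmpFun (logRatio C u v) := by
  have hI := integral_eq_mul_integral_exp hC hu hv
  have hS : gammaSl C v u 1 1 =
      2 * (∫ ξ in (0:ℝ)..1, C v ^ ξ * C (fun j => min (u j) (v j)) ^ (1 - ξ) * C u ^ ξ) -
        2 * C v * C u := by
    -- The first integral in `gammaSl` is the last one after the substitution `ξ ↦ -ξ`.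
    have hneg := intervalIntegral.integral_comp_neg (a := 0) (b := 1) (fun ξ : ℝ =>
      C u ^ (-ξ) * C (fun j => min (v j) (u j)) ^ (ξ + 1) * C v ^ (1 - ξ - 1))
    simp only [neg_zero] at hneg
    unfold gammaSl
    simp only [div_one, Real.rpow_one, sub_self, intervalIntegral.integral_same, add_zero]
    rw [← hneg, show (1:ℝ) + 1 = 2 by norm_num, two_mul (∫ ξ in (0:ℝ)..1, _)]
    congr 2
    · refine intervalIntegral.integral_congr fun ξ _ => ?_
      simp only [neg_neg, min_comm (v _), show -ξ + 1 = 1 - ξ by ring,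
        show 1 - -ξ - 1 = ξ by ring]
      ring
    · refine intervalIntegral.integral_congr fun ξ _ => ?_
      simp only [min_comm (v _), show ξ + 1 - 1 = ξ by ring]
  rw [hS, hI, gammaD, min_eq_mul_exp_logRatio hC hu hv, cmpFun]
  ring

lemma gammaD_sub_gammaSl_posSemidef {d : ℕ} {C : (Fin d → ℝ) → ℝ} (hC : IsEVCopula C)
    {ι : Type*} [Fintype ι] (p : ι → Fin d → ℝ) (hp : ∀ i, p i ∈ unitBox d) :
    (Matrix.of fun i j => gammaD C (p i) (p j) - gammaSl C (p j) (p i) 1 1).PosSemidef := by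
  have h : (Matrix.of fun i j => gammaD C (p i) (p j) - gammaSl C (p j) (p i) 1 1) =
      Matrix.vecMulVec (fun i => C (p i)) (star fun i => C (p i)) ⊙
        Matrix.of fun i j => cmpFun (logRatio C (p i) (p j)) := by
    ext i j
    simp [Matrix.vecMulVec_apply, gammaD_sub_gammaSl_eq hC (hp i) (hp j)]
  rw [h]
  exact (Matrix.posSemidef_vecMulVec_self_star _).hadamard
    (posSemidef_map_of_hasSum (logRatio_posSemidef hC p hp) cmpCoeff_nonneg cmpFun_hasSum)

/-! ### Estimated margins -/

/-- The coefficients `(1, -Ċ_1(u), …, -Ċ_d(u))` of the combination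
`δ_u - ∑ j, Ċ_j(u) δ_{u^{(j)}}`; the coefficient of `δ_u` is indexed by `none`. -/
def hatCoeff {d : ℕ} (Cdot : Fin d → (Fin d → ℝ) → ℝ) (u : Fin d → ℝ) : Option (Fin d) → ℝ
  | none => 1
  | some j => -Cdot j u

/-- The points `(u, u^{(1)}, …, u^{(d)})` of the combination `δ_u - ∑ j, Ċ_j(u) δ_{u^{(j)}}`. -/
def hatPoint {d : ℕ} (u : Fin d → ℝ) : Option (Fin d) → Fin d → ℝ
  | none => u
  | some j => coordVec u j

lemma hatPoint_mem {d : ℕ} {u : Fin d → ℝ} (hu : u ∈ unitBox d) (o : Option (Fin d)) :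
    hatPoint u o ∈ unitBox d := by
  rcases o with _ | j
  · exact hu
  · intro k
    rcases eq_or_ne k j with rfl | h
    · simpa [hatPoint, coordVec] using hu k
    · simp [hatPoint, coordVec, h]

lemma hatKernel_eq_sum {d : ℕ} (Cdot : Fin d → (Fin d → ℝ) → ℝ)
    (k : (Fin d → ℝ) → (Fin d → ℝ) → ℝ) (u v : Fin d → ℝ) :
    hatKernel Cdot k u v =
      ∑ o, ∑ o', hatCoeff Cdot u o * k (hatPoint u o) (hatPoint v o') * hatCoeff Cdot v o' := by
  simp only [Fintype.sum_option, hatCoeff, hatPoint, hatKernel, Finset.sum_add_distrib]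
  have h : ∀ j j', -Cdot j u * k (coordVec u j) (coordVec v j') * -Cdot j' v =
      Cdot j u * Cdot j' v * k (coordVec u j) (coordVec v j') := fun j j' => by ring
  simp only [h]
  simp only [one_mul, mul_one, neg_mul, Finset.sum_neg_distrib, mul_comm (k u _)]
  ring

/-- Replacing a kernel by its `hatKernel` preserves positive semidefiniteness. -/
lemma hatKernel_posSemidef {d : ℕ} (Cdot : Fin d → (Fin d → ℝ) → ℝ)
    (k : (Fin d → ℝ) → (Fin d → ℝ) → ℝ) {ι : Type*} [Fintype ι] (u : ι → Fin d → ℝ)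
    (hk : (Matrix.of fun a b : ι × Option (Fin d) =>
      k (hatPoint (u a.1) a.2) (hatPoint (u b.1) b.2)).PosSemidef) :
    (Matrix.of fun i j => hatKernel Cdot k (u i) (u j)).PosSemidef := by
  rw [posSemidef_iff_sum] at hk ⊢
  obtain ⟨hsymm, hpos⟩ := hk
  simp only [Matrix.of_apply] at hsymm hpos ⊢
  simp only [hatKernel_eq_sum]
  constructor
  · intro i j
    rw [Finset.sum_comm]
    refine Finset.sum_congr rfl fun o _ => Finset.sum_congr rfl fun o' _ => ?_
    rw [hsymm (i, o') (j, o)]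
    ring
  · intro x
    refine (hpos fun a => x a.1 * hatCoeff Cdot (u a.1) a.2).trans_eq ?_
    simp only [Fintype.sum_prod_type, Finset.mul_sum, Finset.sum_mul]
    refine Finset.sum_congr rfl fun i _ => ?_
    rw [Finset.sum_comm]
    refine Finset.sum_congr rfl fun j _ => Finset.sum_congr rfl fun o _ =>
      Finset.sum_congr rfl fun o' _ => ?_
    ring

/-- the limiting covariance matrix of the sliding-blocks empirical copula process
(estimated margins) is dominated in the Loewner order by that of the disjoint-blocks process. -/
theorem statement1 {d : ℕ} (C : (Fin d → ℝ) → ℝ)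
    (hC : IsEVCopula C)
    (Cdot : Fin d → (Fin d → ℝ) → ℝ)
    (hderiv : ∀ j : Fin d, ∀ u ∈ unitBox d, u j ∈ Set.Ioo (0:ℝ) 1 →
      HasDerivAt (fun t => C (Function.update u j t)) (Cdot j u) (u j))
    (hcont : ∀ j : Fin d,
      ContinuousOn (Cdot j) {u | u ∈ unitBox d ∧ u j ∈ Set.Ioo (0:ℝ) 1})
    (hzero : ∀ j : Fin d, ∀ u : Fin d → ℝ, (u j = 0 ∨ u j = 1) → Cdot j u = 0)
    (N : ℕ) (u : Fin N → Fin d → ℝ) (hu : ∀ i, u i ∈ unitBox d) :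
    (Matrix.of fun i j : Fin N =>
      hatKernel Cdot (fun x y => gammaD C x y) (u i) (u j) -
        hatKernel Cdot (fun x y => gammaSl C y x 1 1) (u i) (u j)).PosSemidef := by
  have h := hatKernel_posSemidef Cdot (fun x y => gammaD C x y - gammaSl C y x 1 1) u
    (gammaD_sub_gammaSl_posSemidef hC (fun a : Fin N × Option (Fin d) => hatPoint (u a.1) a.2)
      fun a => hatPoint_mem (hu a.1) a.2)
  convert h using 4 with i j
  simp only [hatKernel_eq_sum, ← Finset.sum_sub_distrib]
  exact Finset.sum_congr rfl fun o _ => Finset.sum_congr rfl fun o' _ => by ring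
end
end

section
/- Let (C_k)_{k∈ℕ} be a sequence of d-dimensional copulas and C_∞ a function on [0,1]^d for which the second order condition holds with auxiliary function φ (regularly varying of index ρ_φ < 0) and limit function S. Let (m_n) be positive integers with m_n → ∞ and m_n/n → 0, and suppose √(n/m_n)·φ(m_n) = O(1). Then for every compact set A ⊂ (0,∞) and every convergent sequence (a_n) in A, the set of continuous functions { √(n/⌊m_n a_n⌋)·(C_{⌊m_n a_n⌋} − C_∞) : n ∈ ℕ, ⌊m_n a_n⌋ ≥ 1 } is relatively compact in the space C([0,1]^d) of continuous functions with the supremum norm. -/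
/-!
Put `k_n = ⌊m_n a_n⌋`. The functions in question are `c_n • h_n` with `c_n = √(n/k_n) φ(k_n)` and
`h_n = (C_{k_n} - C_∞)/φ(k_n)`. Since `k_n → ∞`, the second order condition gives `h_n → S`
uniformly, so as soon as `c_n` is bounded, all but finitely many of the functions are within any
given `ε` of the compact segment `{c • S : |c| ≤ B}`, and the family is totally bounded.

As `k_n / m_n` stays in a compact subset of `(0, ∞)`, boundedness of `c_n` follows from that of
`√(n/m_n) φ(m_n)` once `φ p / φ k` is known to be bounded for large `p`, `k` with `p / k` in such a
set (`RegVar.ratio_bounded`). The sequence `φ` need not be monotone, and regular variation is only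
given pointwise in `x`, so this is a form of the uniform boundedness theorem for regularly varying
sequences. By an Egorov-type argument (`exists_volume_unbounded_lt`), `φ ⌊xk⌋ / φ k` and
`φ p / φ ⌊yp⌋` are bounded, uniformly in `k` and `p`, for `x` and `y` off sets of small measure. A
comparison of measures gives admissible `x`, `y` with `x * k = y * p`, so that `⌊xk⌋ = ⌊yp⌋`, and
multiplying the two bounds gives the claim.
-/

open MeasureTheory Filter Set

noncomputable section

/-- `φ` is regularly varying (along the integers) with index `ρ`. -/
def RegVar (φ : ℕ → ℝ) (ρ : ℝ) : Prop :=
  ∀ x : ℝ, 0 < x → Tendsto (fun k : ℕ => φ ⌊x * (k:ℝ)⌋₊ / φ k) atTop (nhds (x ^ ρ))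

/-- The second order condition: `sup_u |C_m(u) − C_∞(u) − φ(m) S(u)| = o(φ(m))` with `φ`
regularly varying of negative index and `S` continuous and not identically zero. -/
def SecondOrderCond {d : ℕ} (C : ℕ → (Fin d → ℝ) → ℝ) (Cinf : (Fin d → ℝ) → ℝ)
    (φ : ℕ → ℝ) (ρφ : ℝ) (S : (Fin d → ℝ) → ℝ) : Prop :=
  (∀ m, 0 < φ m) ∧ ρφ < 0 ∧ RegVar φ ρφ ∧
  ContinuousOn S (unitBox d) ∧ (∃ u ∈ unitBox d, S u ≠ 0) ∧
  TendstoUniformlyOn (fun m u => (C m u - Cinf u) / φ m) S atTop (unitBox d)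


/-- A pointwise convergent sequence of measurable functions on a bounded interval is uniformly
bounded from above, from some index on, off a set of small measure. A single natural number `N`
serves both as the index and as the bound. -/
lemma exists_volume_unbounded_lt (f : ℕ → ℝ → ℝ) (hf : ∀ k, Measurable (f k)) (a b : ℝ)
    (hlim : ∀ x ∈ Icc a b, ∃ l, Tendsto (fun k => f k x) atTop (nhds l))
    (ε : ENNReal) (hε : 0 < ε) :
    ∃ N₀ : ℕ, ∀ N, N₀ ≤ N →
      volume (Icc a b ∩ {x | ∃ k, N ≤ k ∧ (N : ℝ) < f k x}) < ε := by
  set s : ℕ → Set ℝ := fun N => Icc a b ∩ {x | ∃ k, N ≤ k ∧ (N : ℝ) < f k x} with hs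
  have hmeas : ∀ N, MeasurableSet (s N) := by
    intro N
    have : {x | ∃ k, N ≤ k ∧ (N : ℝ) < f k x} = ⋃ k, ⋃ (_ : N ≤ k), {x | (N : ℝ) < f k x} := by
      ext x; simp
    refine measurableSet_Icc.inter ?_
    rw [this]
    exact MeasurableSet.iUnion fun k => MeasurableSet.iUnion fun _ =>
      measurableSet_lt measurable_const (hf k)
  have hanti : Antitone s := by
    rintro N N' hN x ⟨hx, k, hk, hlt⟩
    exact ⟨hx, k, hN.trans hk, lt_of_le_of_lt (by exact_mod_cast hN) hlt⟩
  have hempty : ⋂ N, s N = ∅ := by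
    rw [Set.eq_empty_iff_forall_notMem]
    intro x hx
    rw [Set.mem_iInter] at hx
    obtain ⟨l, hl⟩ := hlim x (hx 0).1
    obtain ⟨N₁, hN₁⟩ := eventually_atTop.1 (hl.eventually_lt_const (lt_add_one l))
    obtain ⟨N₂, hN₂⟩ := exists_nat_ge (l + 1)
    obtain ⟨-, k, hk, hlt⟩ := hx (max N₁ N₂)
    have h1 := hN₁ k ((le_max_left _ _).trans hk)
    have h2 : (N₂ : ℝ) ≤ ((max N₁ N₂ : ℕ) : ℝ) := by exact_mod_cast le_max_right N₁ N₂
    linarith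
  have htend := tendsto_measure_iInter_atTop (μ := volume) (s := s)
    (fun N => (hmeas N).nullMeasurableSet) hanti
    ⟨0, ((measure_mono inter_subset_left).trans_lt measure_Icc_lt_top).ne⟩
  rw [hempty, measure_empty] at htend
  exact eventually_atTop.1 (htend.eventually_lt_const hε)

/-- Uniform boundedness for regularly varying sequences: `φ p / φ k` is bounded for large `k`, `p`
with `p / k` in a compact subset of `(0, ∞)`. -/
lemma RegVar.ratio_bounded {φ : ℕ → ℝ} {ρ : ℝ} (hpos : ∀ k, 0 < φ k) (h : RegVar φ ρ)
    {α β : ℝ} (hα : 0 < α) :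
    ∃ (M : ℝ) (N : ℕ), 0 ≤ M ∧ ∀ k p : ℕ, N ≤ k → N ≤ p → α * k ≤ p → (p : ℝ) ≤ β * k →
      φ p ≤ M * φ k := by
  have hfl : ∀ k : ℕ, Measurable fun x : ℝ => φ ⌊x * (k : ℝ)⌋₊ := fun k =>
    (measurable_of_countable φ).comp (Nat.measurable_floor.comp (measurable_id.mul_const _))
  -- `x = (p / k) y` ranges over `[α, 2β]` when `y` ranges over `[1, 2]`.
  obtain ⟨N₁, hN₁⟩ := exists_volume_unbounded_lt (fun k x => φ ⌊x * (k : ℝ)⌋₊ / φ k)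
    (fun k => (hfl k).div_const _) α (2 * β) (fun x hx => ⟨_, h x (hα.trans_le hx.1)⟩)
    (ENNReal.ofReal (α / 2)) (by simpa using hα)
  obtain ⟨N₂, hN₂⟩ := exists_volume_unbounded_lt (fun k x => φ k / φ ⌊x * (k : ℝ)⌋₊)
    (fun k => (hfl k).const_div _) 1 2
    (fun x hx => by
      have hx0 : 0 < x := one_pos.trans_le hx.1
      refine ⟨_, ((h x hx0).inv₀ (Real.rpow_pos_of_pos hx0 ρ).ne').congr fun k => ?_⟩
      rw [inv_div])
    (ENNReal.ofReal (1 / 2)) (by simp)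
  set N := max (max N₁ N₂) 1 with hN
  refine ⟨(N : ℝ) * N, N, by positivity, fun k p hk hp h1 h2 => ?_⟩
  have hX := hN₁ N ((le_max_left _ _).trans (le_max_left _ _))
  have hY := hN₂ N ((le_max_right _ _).trans (le_max_left _ _))
  set X := Icc α (2 * β) ∩ {x | ∃ k : ℕ, N ≤ k ∧ (N : ℝ) < φ ⌊x * (k : ℝ)⌋₊ / φ k}
  set Y := Icc (1 : ℝ) 2 ∩ {x | ∃ k : ℕ, N ≤ k ∧ (N : ℝ) < φ k / φ ⌊x * (k : ℝ)⌋₊}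
  have hk0 : (0 : ℝ) < k := by exact_mod_cast (le_max_right _ _).trans hk
  set r : ℝ := p / k with hr
  have hrα : α ≤ r := by rwa [hr, le_div_iff₀ hk0]
  have hrβ : r ≤ β := by rwa [hr, div_le_iff₀ hk0]
  have hr0 : 0 < r := hα.trans_le hrα
  -- The exceptional `y`, namely `Y` and `X / r`, cannot fill the unit length of `[1, 2]`.
  obtain ⟨y, hy, hyX, hyY⟩ : ∃ y ∈ Icc (1 : ℝ) 2, r * y ∉ X ∧ y ∉ Y := by
    by_contra! hcon
    have hsub : Icc (1 : ℝ) 2 ⊆ (r * ·) ⁻¹' X ∪ Y := by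
      intro y hy
      by_cases hyX : r * y ∈ X
      · exact Or.inl hyX
      · exact Or.inr (hcon y hy hyX)
    have hpre : volume ((r * ·) ⁻¹' X) ≤ ENNReal.ofReal (1 / 2) := by
      rw [Real.volume_preimage_mul_left hr0.ne', abs_of_pos (inv_pos.2 hr0)]
      calc ENNReal.ofReal r⁻¹ * volume X
          ≤ ENNReal.ofReal α⁻¹ * ENNReal.ofReal (α / 2) := by
            gcongr
        _ = ENNReal.ofReal (1 / 2) := by
            rw [← ENNReal.ofReal_mul (by positivity)]
            congr 1
            field_simp
    have hlt : volume (Icc (1 : ℝ) 2) < ENNReal.ofReal (1 / 2) + ENNReal.ofReal (1 / 2) :=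
      ((measure_mono hsub).trans (measure_union_le _ _)).trans_lt
        (ENNReal.add_lt_add_of_le_of_lt (ne_top_of_le_ne_top ENNReal.ofReal_ne_top hpre) hpre hY)
    rw [Real.volume_Icc, ← ENNReal.ofReal_add (by norm_num) (by norm_num)] at hlt
    norm_num at hlt
  have hx : r * y ∈ Icc α (2 * β) :=
    ⟨by nlinarith [hy.1], by nlinarith [hy.2]⟩
  have hb1 : φ ⌊r * y * (k : ℝ)⌋₊ / φ k ≤ N := by
    by_contra! hc
    exact hyX ⟨hx, k, hk, hc⟩
  have hb2 : φ p / φ ⌊y * (p : ℝ)⌋₊ ≤ N := by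
    by_contra! hc
    exact hyY ⟨hy, p, hp, hc⟩
  have heq : r * y * (k : ℝ) = y * p := by
    rw [hr]; field_simp
  rw [heq, div_le_iff₀ (hpos _)] at hb1
  rw [div_le_iff₀ (hpos _)] at hb2
  calc φ p ≤ N * φ ⌊y * (p : ℝ)⌋₊ := hb2
    _ ≤ N * (N * φ k) := by gcongr
    _ = N * N * φ k := by ring

lemma isCompact_unitBox (d : ℕ) : IsCompact (unitBox d) := by
  have : unitBox d = Set.pi univ fun _ : Fin d => Icc (0 : ℝ) 1 := by
    ext u
    simp only [unitBox, Set.mem_ofPred_eq, Set.mem_pi, Set.mem_univ, true_implies]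
  rw [this]
  exact isCompact_univ_pi fun _ => isCompact_Icc

/-- A sequence of vectors, possibly undefined at some indices, that approaches a bounded segment
of a line through the origin has a totally bounded range. -/
lemma totallyBounded_of_near_segment {E : Type*} [NormedAddCommGroup E] [NormedSpace ℝ E]
    (P : ℕ → E → Prop) (huniq : ∀ n g g', P n g → P n g' → g = g') (v : E) (B : ℝ)
    (h : ∀ ε > 0, ∃ N, ∀ n, N ≤ n → ∀ g, P n g → ∃ c ∈ Icc (-B) B, ‖g - c • v‖ < ε) :
    TotallyBounded {g | ∃ n, P n g} := by
  rw [Metric.totallyBounded_iff]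
  intro ε hε
  have hT : IsCompact ((fun c : ℝ => c • v) '' Icc (-B) B) :=
    isCompact_Icc.image (by fun_prop)
  obtain ⟨t, htf, ht⟩ := Metric.totallyBounded_iff.1 hT.totallyBounded (ε / 2) (half_pos hε)
  obtain ⟨N, hN⟩ := h (ε / 2) (half_pos hε)
  have hfin : (⋃ n ∈ Finset.range N, {g | P n g}).Finite :=
    Set.Finite.biUnion (Finset.finite_toSet _) fun n _ =>
      Set.Subsingleton.finite fun g hg g' hg' => huniq n g g' hg hg'
  refine ⟨t ∪ ⋃ n ∈ Finset.range N, {g | P n g}, htf.union hfin, ?_⟩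
  rintro g ⟨n, hn⟩
  rw [Set.mem_iUnion₂]
  rcases lt_or_ge n N with hlt | hge
  · refine ⟨g, Or.inr ?_, Metric.mem_ball_self hε⟩
    exact Set.mem_iUnion₂.2 ⟨n, Finset.mem_range.2 hlt, hn⟩
  · obtain ⟨c, hc, hd⟩ := hN n hge g hn
    obtain ⟨w, hw, hcw⟩ := Set.mem_iUnion₂.1 (ht ⟨c, hc, rfl⟩)
    refine ⟨w, Or.inl hw, ?_⟩
    rw [Metric.mem_ball] at hcw ⊢
    rw [← dist_eq_norm] at hd
    linarith [dist_triangle g (c • v) w]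

/-- under the second order condition with `√(n/m_n) φ(m_n) = O(1)`, the family
`√(n/⌊m_n a_n⌋)(C_{⌊m_n a_n⌋} − C_∞)` is relatively compact in `C([0,1]^d)`. -/
theorem statement17 {d : ℕ}
    (C : ℕ → (Fin d → ℝ) → ℝ) (hcop : ∀ k, IsCopula (C k))
    (Cinf : (Fin d → ℝ) → ℝ) (φ : ℕ → ℝ) (ρφ : ℝ) (S : (Fin d → ℝ) → ℝ)
    (h2 : SecondOrderCond C Cinf φ ρφ S)
    (m : ℕ → ℕ) (hminf : Tendsto m atTop atTop)
    (hmo : Tendsto (fun n => (m n : ℝ) / n) atTop (nhds 0))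
    (hO : ∃ K : ℝ, ∀ n : ℕ, Real.sqrt ((n:ℝ) / (m n)) * φ (m n) ≤ K)
    (A : Set ℝ) (hAc : IsCompact A) (hApos : A ⊆ Set.Ioi 0)
    (a : ℕ → ℝ) (haA : ∀ n, a n ∈ A) (haconv : ∃ l, Tendsto a atTop (nhds l)) :
    IsCompact (closure {g : C(↥(unitBox d), ℝ) | ∃ n : ℕ,
      1 ≤ ⌊(m n : ℝ) * a n⌋₊ ∧
      ∀ x : ↥(unitBox d), g x =
        Real.sqrt ((n:ℝ) / (⌊(m n : ℝ) * a n⌋₊ : ℝ)) *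
          (C ⌊(m n : ℝ) * a n⌋₊ (x : Fin d → ℝ) - Cinf (x : Fin d → ℝ))}) := by
  obtain ⟨hφ, -, hreg, hScont, -, hunif⟩ := h2
  obtain ⟨K, hK⟩ := hO
  obtain ⟨l, hl⟩ := haconv
  have hl0 : 0 < l := hApos (hAc.isClosed.mem_of_tendsto hl (Eventually.of_forall haA))
  have : CompactSpace (unitBox d) := isCompact_iff_compactSpace.1 (isCompact_unitBox d)
  set k : ℕ → ℕ := fun n => ⌊(m n : ℝ) * a n⌋₊ with hk
  have hmR : Tendsto (fun n => (m n : ℝ)) atTop atTop :=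
    tendsto_natCast_atTop_atTop.comp hminf
  have hkinf : Tendsto k atTop atTop := tendsto_nat_floor_atTop.comp (hmR.atTop_mul_pos hl0 hl)
  obtain ⟨M, N, hM0, hM⟩ := hreg.ratio_bounded hφ (α := l / 4) (β := 2 * l) (by positivity)
  -- `k n / m n` eventually lies in `[l / 4, 2 l]`; the floor costs at most `1 ≤ m n * (l / 4)`.
  have hcoef : ∀ᶠ n : ℕ in atTop,
      Real.sqrt ((n : ℝ) / (k n : ℝ)) * φ (k n) ≤ Real.sqrt (4 / l) * M * K := by
    filter_upwards [hminf.eventually_ge_atTop (max N 1), hkinf.eventually_ge_atTop (max N 1),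
      hmR.eventually_ge_atTop (4 / l), hl.eventually_lt_const (show l < 2 * l by linarith),
      hl.eventually_const_lt (show l / 2 < l by linarith)] with n hm1 hk1 hm2 ha1 ha2
    have hm0 : (0 : ℝ) < m n := by exact_mod_cast (le_max_right _ _).trans hm1
    have hk0 : (0 : ℝ) < k n := by exact_mod_cast (le_max_right _ _).trans hk1
    have hup : (k n : ℝ) ≤ m n * a n := Nat.floor_le (by nlinarith)
    have hlow : (m n : ℝ) * a n < k n + 1 := Nat.lt_floor_add_one _
    rw [div_le_iff₀ hl0] at hm2
    have hlow' : l / 4 * m n ≤ k n := by nlinarith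
    have hφk : φ (k n) ≤ M * φ (m n) :=
      hM _ _ ((le_max_left _ _).trans hm1) ((le_max_left _ _).trans hk1) hlow' (by nlinarith)
    have hsq : Real.sqrt ((n : ℝ) / k n) ≤ Real.sqrt (4 / l) * Real.sqrt ((n : ℝ) / m n) := by
      rw [← Real.sqrt_mul (by positivity)]
      refine Real.sqrt_le_sqrt ?_
      rw [div_mul_div_comm, div_le_div_iff₀ hk0 (by positivity)]
      have := mul_le_mul_of_nonneg_left hlow' (Nat.cast_nonneg (α := ℝ) n)
      nlinarith
    calc Real.sqrt ((n : ℝ) / k n) * φ (k n)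
        ≤ (Real.sqrt (4 / l) * Real.sqrt ((n : ℝ) / m n)) * (M * φ (m n)) := by
          gcongr
          exact (hφ _).le
      _ = Real.sqrt (4 / l) * M * (Real.sqrt ((n : ℝ) / m n) * φ (m n)) := by ring
      _ ≤ Real.sqrt (4 / l) * M * K := by gcongr; exact hK n
  set B := Real.sqrt (4 / l) * M * K
  let S' : C(↥(unitBox d), ℝ) := ⟨fun x => S x, hScont.domRestrict⟩
  refine TotallyBounded.isCompact_of_isClosed (TotallyBounded.closure ?_) isClosed_closure
  refine totallyBounded_of_near_segment _ ?_ S' B ?_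
  · rintro n g g' ⟨-, hg⟩ ⟨-, hg'⟩
    ext x
    rw [hg, hg']
  · intro ε hε
    obtain ⟨n₀, hn₀⟩ := eventually_atTop.1 hcoef
    have hB : 0 ≤ B := (mul_nonneg (Real.sqrt_nonneg _) (hφ _).le).trans (hn₀ n₀ le_rfl)
    -- `B + 1` rather than `B`, which may vanish.
    have hS := hkinf.eventually
      (Metric.tendstoUniformlyOn_iff.1 hunif (ε / (2 * (B + 1))) (by positivity))
    obtain ⟨n₁, hn₁⟩ := eventually_atTop.1 (hcoef.and hS)
    refine ⟨n₁, fun n hn g hg => ?_⟩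
    obtain ⟨hc, hS⟩ := hn₁ n hn
    have hc0 : 0 ≤ Real.sqrt ((n : ℝ) / (k n : ℝ)) * φ (k n) :=
      mul_nonneg (Real.sqrt_nonneg _) (hφ _).le
    refine ⟨Real.sqrt ((n : ℝ) / (k n : ℝ)) * φ (k n), ⟨by linarith, hc⟩, ?_⟩
    refine lt_of_le_of_lt ((ContinuousMap.norm_le _ (half_pos hε).le).2 fun x => ?_)
      (half_lt_self hε)
    have hx := hS x x.2
    rw [dist_comm, Real.dist_eq] at hx
    have hval : (g - (Real.sqrt ((n : ℝ) / (k n : ℝ)) * φ (k n)) • S') x =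
        Real.sqrt ((n : ℝ) / (k n : ℝ)) * φ (k n) *
          ((C (k n) (x : Fin d → ℝ) - Cinf (x : Fin d → ℝ)) / φ (k n) - S x) := by
      have hne := (hφ (k n)).ne'
      simp only [ContinuousMap.sub_apply, ContinuousMap.smul_apply, hg.2 x, smul_eq_mul]
      change Real.sqrt ((n : ℝ) / (k n : ℝ)) * (C (k n) x - Cinf x) - _ * S x = _
      field_simp
    rw [hval, Real.norm_eq_abs, abs_mul, abs_of_nonneg hc0]
    calc _ ≤ B * (ε / (2 * (B + 1))) := by gcongr
      _ ≤ (B + 1) * (ε / (2 * (B + 1))) := by gcongr; linarith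
      _ = ε / 2 := by field_simp
end
end
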